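/- For every x ∈ X_or and every input vector u ∈ ℝ^M, the vector A.mulVec x + B.mulVec u belongs to X_or. In particular, along the dynamics ẋ = Ax + Bu, if the states of all nodes in each cluster coincide at some instant, then so do their derivatives. -/

import Mathlib

open Matrix

/-- The `N × N` permutation matrix of a permutation `σ` of `Fin N`, with the convention
`(permMat N σ).mulVec x i = x (σ⁻¹ i)`. -/
def permMat (N : ℕ) (σ : Equiv.Perm (Fin N)) : Matrix (Fin N) (Fin N) ℝ :=
  Matrix.of fun i j => if σ j = i then (1 : ℝ) else 0

/-- The group-consensus subspace: vectors that are constant on each orbit of the natural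
action of the subgroup `G` of permutations of `Fin N`. -/
def consensusSet (N : ℕ) (G : Subgroup (Equiv.Perm (Fin N))) : Set (Fin N → ℝ) :=
  {x | ∀ i j : Fin N, (∃ σ ∈ G, σ i = j) → x i = x j}

theorem permMat_mulVec_apply (N : ℕ) (σ : Equiv.Perm (Fin N)) (x : Fin N → ℝ) (i : Fin N) :
    (permMat N σ).mulVec x (σ i) = x i := by
  simp [permMat, Matrix.mulVec, dotProduct]

/-- For every `x ∈ X_or` and every input `u`, the vector `A.mulVec x + B.mulVec u`
belongs to `X_or`: along `ẋ = Ax + Bu`, if the states of all nodes in each cluster coincide,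
then so do their derivatives. -/
theorem consensus_subspace_dynamics_invariant (N M : ℕ) (A : Matrix (Fin N) (Fin N) ℝ)
    (B : Matrix (Fin N) (Fin M) ℝ) (G : Subgroup (Equiv.Perm (Fin N)))
    (hA : ∀ σ ∈ G, permMat N σ * A = A * permMat N σ)
    (hB : ∀ σ ∈ G, permMat N σ * B = B)
    (x : Fin N → ℝ) (hx : x ∈ consensusSet N G) (u : Fin M → ℝ) :
    A.mulVec x + B.mulVec u ∈ consensusSet N G := by
  rintro i j ⟨σ, hσ, rfl⟩
  have hPx : (permMat N σ).mulVec x = x := by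
    funext k
    obtain ⟨l, rfl⟩ := σ.surjective k
    rw [permMat_mulVec_apply]
    exact hx l (σ l) ⟨σ, hσ, rfl⟩
  have hP : (permMat N σ).mulVec (A.mulVec x + B.mulVec u) = A.mulVec x + B.mulVec u := by
    rw [Matrix.mulVec_add, Matrix.mulVec_mulVec, Matrix.mulVec_mulVec, hA σ hσ, hB σ hσ,
      ← Matrix.mulVec_mulVec, hPx]
  rw [← permMat_mulVec_apply N σ (A.mulVec x + B.mulVec u) i, hP]
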